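/- Let H and G be real Hilbert spaces, let f ∈ Γ0(H), g ∈ Γ0(G), l ∈ Γ0(G), let h: H → ℝ be convex and Gâteaux differentiable on all of H, assume dom l* = G, and let L ∈ B(H, G). Suppose there exists x̄ ∈ H with 0 ∈ ∂f(x̄) + ∇h(x̄) + L*(∂g □ ∂l)(L x̄). Then every x ∈ H satisfying 0 ∈ ∂f(x) + ∇h(x) + L*(∂g □ ∂l)(L x) is a minimizer of f + h + (g □ l) ∘ L; i.e. zer(∂f + ∇h + L*(∂g □ ∂l)L) ⊆ argmin (f + h + (g □ l) ∘ L). -/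

import Mathlib

open Pointwise
open scoped RealInnerProductSpace

/-- `f` belongs to `Γ₀(H)`: proper, nowhere `⊥`, lower semicontinuous and convex,
with values in `(-∞, +∞]` modelled by `EReal`. -/
def Gamma0 {H : Type*} [NormedAddCommGroup H] [InnerProductSpace ℝ H]
    (f : H → EReal) : Prop :=
  (∃ x, f x ≠ ⊤) ∧ (∀ x, f x ≠ ⊥) ∧ LowerSemicontinuous f ∧
    ∀ x y : H, ∀ t : ℝ, 0 ≤ t → t ≤ 1 →
      f (t • x + (1 - t) • y) ≤ (t : EReal) * f x + ((1 - t : ℝ) : EReal) * f y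

/-- The Moreau subdifferential of an `EReal`-valued function. -/
def subdiff {H : Type*} [NormedAddCommGroup H] [InnerProductSpace ℝ H]
    (f : H → EReal) (x : H) : Set H :=
  {u | ∀ y : H, ((⟪y - x, u⟫ : ℝ) : EReal) + f x ≤ f y}

/-- The Fenchel conjugate of an `EReal`-valued function. -/
noncomputable def conj {H : Type*} [NormedAddCommGroup H] [InnerProductSpace ℝ H]
    (f : H → EReal) (v : H) : EReal :=
  ⨆ x : H, ((⟪x, v⟫ : ℝ) : EReal) - f x

/-- The inf-convolution of two `EReal`-valued functions. -/
noncomputable def infConv {H : Type*} [NormedAddCommGroup H]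
    (f g : H → EReal) (x : H) : EReal :=
  ⨅ y : H, f y + g (x - y)

/-- The set-valued inverse. -/
def svInv {K : Type*} (A : K → Set K) : K → Set K := fun u => {x | u ∈ A x}

/-- The parallel sum `A □ B = (A⁻¹ + B⁻¹)⁻¹` of set-valued operators. -/
def parSum {K : Type*} [AddCommMonoid K] (A B : K → Set K) : K → Set K :=
  svInv (fun u => svInv A u + svInv B u)

/-- A point with a subgradient of a proper function has a finite value. -/
lemma exists_real_of_mem_subdiff {E : Type*} [NormedAddCommGroup E] [InnerProductSpace ℝ E]
    {f : E → EReal} (hf : Gamma0 f) {x u : E} (hu : u ∈ subdiff f x) :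
    ∃ r : ℝ, f x = (r : EReal) := by
  obtain ⟨⟨z, hz⟩, hbot, -, -⟩ := hf
  have h1 : f x ≠ ⊤ := by
    intro ht
    have h2 := hu z
    rw [ht, EReal.coe_add_top] at h2
    exact hz (top_le_iff.mp h2)
  exact ⟨(f x).toReal, (EReal.coe_toReal h1 (hbot x)).symm⟩

/-- Gradient inequality for convex functions. -/
lemma gradient_ineq {E : Type*} [NormedAddCommGroup E] [InnerProductSpace ℝ E] [CompleteSpace E]
    {h : E → ℝ} (hc : ConvexOn ℝ Set.univ h) {x p : E} (hp : HasGradientAt h p x) (y : E) :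
    h x + ⟪y - x, p⟫ ≤ h y := by
  have hline : HasDerivAt (fun t : ℝ => h (AffineMap.lineMap x y t)) ⟪p, y - x⟫ 0 := by
    have h1 : HasFDerivAt h (InnerProductSpace.toDual ℝ E p)
        (AffineMap.lineMap x y (0 : ℝ)) := by
      simpa using hp.hasFDerivAt
    have h2 : HasDerivAt (fun t : ℝ => (AffineMap.lineMap x y t : E)) (y - x) 0 :=
      AffineMap.hasDerivAt_lineMap
    have h3 := h1.comp_hasDerivAt (0 : ℝ) h2
    rw [InnerProductSpace.toDual_apply_apply] at h3
    exact h3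
  have hcl : ConvexOn ℝ Set.univ (fun t : ℝ => h (AffineMap.lineMap x y t)) := by
    exact hc.comp_affineMap (AffineMap.lineMap x y : ℝ →ᵃ[ℝ] E)
  have h4 := hcl.le_slope_of_hasDerivAt (Set.mem_univ 0) (Set.mem_univ 1) one_pos hline
  simp [slope_def_field] at h4
  rw [real_inner_comm] at h4
  linarith

/-- if the inclusion `0 ∈ ∂f(x̄) + ∇h(x̄) + L*(∂g □ ∂l)(L x̄)` has a solution,
then every solution of this inclusion minimizes `f + h + (g □ l) ∘ L`. -/
theorem stmt_16
    {H : Type*} [NormedAddCommGroup H] [InnerProductSpace ℝ H] [CompleteSpace H]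
    {G : Type*} [NormedAddCommGroup G] [InnerProductSpace ℝ G] [CompleteSpace G]
    (f : H → EReal) (g l : G → EReal)
    (hf : Gamma0 f) (hg : Gamma0 g) (hl : Gamma0 l)
    (h : H → ℝ) (hconv : ConvexOn ℝ Set.univ h)
    (h' : H → H) (hh' : ∀ x : H, HasGradientAt h (h' x) x)
    (hdomlstar : ∀ v : G, conj l v ≠ ⊤)
    (L : H →L[ℝ] G)
    (hqual : ∃ xbar : H,
      (0 : H) ∈ subdiff f xbar + {h' xbar} +
        (⇑(ContinuousLinearMap.adjoint L)) '' parSum (subdiff g) (subdiff l) (L xbar)) :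
    ∀ x : H,
      (0 : H) ∈ subdiff f x + {h' x} +
          (⇑(ContinuousLinearMap.adjoint L)) '' parSum (subdiff g) (subdiff l) (L x) →
        ∀ y : H,
          f x + ((h x : ℝ) : EReal) + infConv g l (L x)
            ≤ f y + ((h y : ℝ) : EReal) + infConv g l (L y) := by
  intro x hx y
  obtain ⟨q, hq, r, ⟨v, hv, rfl⟩, hsum⟩ := Set.mem_add.mp hx
  obtain ⟨u, hu, p, hp, rfl⟩ := Set.mem_add.mp hq
  rw [Set.mem_singleton_iff] at hp
  subst hp
  obtain ⟨a, ha, b, hb, hab⟩ := Set.mem_add.mp (show L x ∈ svInv (subdiff g) v + svInv (subdiff l) v from hv)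
  have ha' : v ∈ subdiff g a := ha
  have hb' : v ∈ subdiff l b := hb
  obtain ⟨fx, hfx⟩ := exists_real_of_mem_subdiff hf hu
  obtain ⟨ga, hga⟩ := exists_real_of_mem_subdiff hg ha'
  obtain ⟨lb, hlb⟩ := exists_real_of_mem_subdiff hl hb'
  have e1 : infConv g l (L x) ≤ ((ga + lb : ℝ) : EReal) := by
    refine (iInf_le _ a).trans (le_of_eq ?_)
    rw [← hab, add_sub_cancel_left, hga, hlb, EReal.coe_add]
  have e2 : ((⟪L y - L x, v⟫ + ga + lb : ℝ) : EReal) ≤ infConv g l (L y) := by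
    refine le_iInf fun w => ?_
    have h1 := add_le_add (ha' w) (hb' (L y - w))
    rw [hga, hlb, ← EReal.coe_add, ← EReal.coe_add, ← EReal.coe_add] at h1
    refine le_trans (le_of_eq ?_) h1
    rw [EReal.coe_eq_coe_iff, ← hab]
    simp only [inner_sub_left, inner_add_left]
    ring
  have e3 : ((⟪y - x, u⟫ + fx : ℝ) : EReal) ≤ f y := by
    have h1 := hu y
    rwa [hfx, ← EReal.coe_add] at h1
  have e4 := gradient_ineq hconv (hh' x) y
  have e5 : ⟪y - x, u⟫ + ⟪y - x, h' x⟫ + ⟪L y - L x, v⟫ = 0 := by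
    rw [← map_sub, ← ContinuousLinearMap.adjoint_inner_right, ← inner_add_right,
      ← inner_add_right, hsum, inner_zero_right]
  calc f x + ((h x : ℝ) : EReal) + infConv g l (L x)
      ≤ (fx : EReal) + (h x : EReal) + ((ga + lb : ℝ) : EReal) := by
        rw [hfx]; exact add_le_add le_rfl e1
    _ ≤ ((⟪y - x, u⟫ + fx : ℝ) : EReal) + (h y : EReal)
          + ((⟪L y - L x, v⟫ + ga + lb : ℝ) : EReal) := by
        rw [← EReal.coe_add, ← EReal.coe_add, ← EReal.coe_add, ← EReal.coe_add,
          EReal.coe_le_coe_iff]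
        linarith
    _ ≤ _ := add_le_add (add_le_add e3 le_rfl) e2
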